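/- Fix positions s₀₀, s₀₂, s₁₀, s₁₁, s₂₁, s₂₂ ∈ V and let M : Matrix (Fin 3 × V) (Fin 3 × V) 𝔽₂ be the block matrix whose (0,0), (0,2), (1,0), (1,1), (2,1), (2,2) blocks are the DPMs D^(s₀₀), D^(s₀₂), D^(s₁₀), D^(s₁₁), D^(s₂₁), D^(s₂₂) respectively, and whose remaining three blocks are zero. Then the Tanner graph of M contains a cycle of length 6 if and only if s₀₀ + s₀₂ + s₁₀ + s₁₁ + s₂₁ + s₂₂ = 0 in V. -/

import Mathlib

/-- `V ℓ` is the 𝔽₂-vector space `Fin ℓ → ZMod 2` with bitwise-XOR addition. -/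
abbrev V (ℓ : ℕ) := Fin ℓ → ZMod 2

/-- The Tanner graph of a binary matrix `H`: `Sum.inl r` and `Sum.inr c` are adjacent
iff `H r c = 1`, and there are no other adjacencies. -/
def tanner {R C : Type*} (H : Matrix R C (ZMod 2)) : SimpleGraph (R ⊕ C) :=
  SimpleGraph.fromRel fun x y =>
    match x, y with
    | Sum.inl r, Sum.inr c => H r c = 1
    | _, _ => False

/-!
A 6-cycle of a Tanner graph alternates between three rows and three columns. In an array of
permutation matrices `a + b = s`, a row and a column of one block row and one block column meet in
at most one way, so the three rows lie in distinct block rows and the three columns in distinct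
block columns: the cycle projects to a hexagon of nonzero blocks. Conversely, such a hexagon lifts
to a cycle exactly when the equations `a k + b k = t k`, `a (k + 1) + b k = u k` around it are
solvable, which by telescoping means `∑ t = ∑ u`. The nonzero blocks of the `3 × 3` array form a
single hexagon, and over `𝔽₂` the signs in `∑ t - ∑ u = 0` disappear.
-/

section Tanner

open SimpleGraph

variable {R C : Type*} {H : Matrix R C (ZMod 2)}

theorem tanner_adj_inl_inr {r : R} {c : C} : (tanner H).Adj (.inl r) (.inr c) ↔ H r c = 1 := by
  simp [tanner]

theorem isLeft_eq_not_of_tanner_adj {x y : R ⊕ C} (h : (tanner H).Adj x y) :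
    y.isLeft = !x.isLeft := by
  rcases x with r | c <;> rcases y with r' | c' <;> simp_all [tanner]

/-- A hexagon of ones in a binary matrix: three distinct rows `r` and three distinct columns `c`
with ones at `(r 0, c 0)`, `(r 1, c 0)`, `(r 1, c 1)`, `(r 2, c 1)`, `(r 2, c 2)`, `(r 0, c 2)`.
Indices live in `Fin 3`, so `k + 1` is cyclic. -/
structure IsHexagon (H : Matrix R C (ZMod 2)) (r : Fin 3 → R) (c : Fin 3 → C) : Prop where
  row_injective : Function.Injective r
  col_injective : Function.Injective c
  apply_self (k : Fin 3) : H (r k) (c k) = 1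
  apply_add_one (k : Fin 3) : H (r (k + 1)) (c k) = 1

theorem exists_copy_cycleGraph_isLeft {n : ℕ} (h : cycleGraph (n + 2) ⊑ tanner H) :
    ∃ f : Copy (cycleGraph (n + 2)) (tanner H), (f 0).isLeft := by
  obtain ⟨f⟩ := h
  by_cases h0 : (f 0).isLeft
  · exact ⟨f, h0⟩
  · let rotation : Copy (cycleGraph (n + 2)) (cycleGraph (n + 2)) :=
      ⟨⟨(· + 1), by simp [cycleGraph_adj]⟩, add_left_injective 1⟩
    have h1 : (f 1).isLeft = !(f 0).isLeft :=
      isLeft_eq_not_of_tanner_adj (f.toHom.map_adj (by simp [cycleGraph_adj]))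
    exact ⟨f.comp rotation, by simpa [rotation, h1] using h0⟩

theorem isLeft_copy_cycleGraph_iff_even {n : ℕ} {f : Copy (cycleGraph (n + 1)) (tanner H)}
    (h0 : (f 0).isLeft) (x : Fin (n + 1)) : (f x).isLeft ↔ Even x.val := by
  induction x using Fin.induction with
  | zero => simpa using h0
  | succ x ih =>
    have hx : (cycleGraph (n + 1)).Adj x.castSucc x.succ :=
      pathGraph_le_cycleGraph (by simp [pathGraph_adj])
    have flip : (f x.succ).isLeft = !(f x.castSucc).isLeft :=
      isLeft_eq_not_of_tanner_adj (f.toHom.map_adj hx)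
    rw [flip, Fin.val_succ, Nat.even_add_one, ← Fin.val_castSucc, ← ih, Bool.not_eq_true',
      Bool.not_eq_true]

theorem exists_isHexagon_of_cycleGraph_isContained (h : cycleGraph 6 ⊑ tanner H) :
    ∃ r c, IsHexagon H r c := by
  obtain ⟨f, h0⟩ := exists_copy_cycleGraph_isLeft h
  have exists_row (k : Fin 3) : ∃ r, f (![0, 2, 4] k) = .inl r := by
    rw [← Sum.isLeft_iff, isLeft_copy_cycleGraph_iff_even h0]
    decide +revert
  have exists_col (k : Fin 3) : ∃ c, f (![1, 3, 5] k) = .inr c := by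
    rw [← Sum.isRight_iff, ← Sum.not_isLeft, isLeft_copy_cycleGraph_iff_even h0]
    decide +revert
  choose r hr using exists_row
  choose c hc using exists_col
  have even_injective : Function.Injective ![(0 : Fin 6), 2, 4] := by decide
  have odd_injective : Function.Injective ![(1 : Fin 6), 3, 5] := by decide
  refine ⟨r, c, fun k l h ↦ even_injective <| f.injective ?_,
    fun k l h ↦ odd_injective <| f.injective ?_, fun k ↦ ?_, fun k ↦ ?_⟩
  · exact (hr k).trans (h ▸ (hr l).symm)
  · exact (hc k).trans (h ▸ (hc l).symm)
  · rw [← tanner_adj_inl_inr, ← hr, ← hc]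
    exact f.toHom.map_adj (by decide +revert)
  · rw [← tanner_adj_inl_inr, ← hr, ← hc]
    exact f.toHom.map_adj (by decide +revert)

theorem IsHexagon.cycleGraph_isContained {r : Fin 3 → R} {c : Fin 3 → C} (h : IsHexagon H r c) :
    cycleGraph 6 ⊑ tanner H := by
  let e : Fin 6 → Fin 3 ⊕ Fin 3 := ![.inl 0, .inr 0, .inl 1, .inr 1, .inl 2, .inr 2]
  have adj_succ (x : Fin 6) :
      (tanner H).Adj (Sum.map r c (e x)) (Sum.map r c (e (x + 1))) := by
    fin_cases x
    · exact tanner_adj_inl_inr.mpr (h.apply_self 0)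
    · exact (tanner_adj_inl_inr.mpr (h.apply_add_one 0)).symm
    · exact tanner_adj_inl_inr.mpr (h.apply_self 1)
    · exact (tanner_adj_inl_inr.mpr (h.apply_add_one 1)).symm
    · exact tanner_adj_inl_inr.mpr (h.apply_self 2)
    · exact (tanner_adj_inl_inr.mpr (h.apply_add_one 2)).symm
  refine ⟨⟨⟨Sum.map r c ∘ e, fun {x y} hxy ↦ ?_⟩,
    (h.row_injective.sumMap h.col_injective).comp (by decide)⟩⟩
  rcases cycleGraph_adj.mp hxy with hxy | hxy
  · obtain rfl := sub_eq_iff_eq_add'.mp hxy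
    exact (adj_succ y).symm
  · obtain rfl := sub_eq_iff_eq_add'.mp hxy
    exact adj_succ x

theorem exists_isCycle_length_six_tanner_iff :
    (∃ (v : R ⊕ C) (p : (tanner H).Walk v v), p.IsCycle ∧ p.length = 6) ↔
      ∃ r c, IsHexagon H r c := by
  rw [← cycleGraph_isContained_iff (by decide)]
  exact ⟨exists_isHexagon_of_cycleGraph_isContained, fun ⟨_, _, h⟩ ↦ h.cycleGraph_isContained⟩

end Tanner

section CyclicSystem

variable {G : Type*} [AddCommGroup G] {n : ℕ} [NeZero n]

theorem exists_forall_add_one_sub_eq_iff_sum_eq_zero {w : Fin n → G} :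
    (∃ a : Fin n → G, ∀ k, a (k + 1) - a k = w k) ↔ ∑ k, w k = 0 := by
  constructor
  · rintro ⟨a, ha⟩
    simp_rw [← ha, Finset.sum_sub_distrib, sub_eq_zero]
    exact Equiv.sum_comp (Equiv.addRight 1) a
  · intro h
    obtain ⟨m, rfl⟩ := Nat.exists_eq_succ_of_ne_zero (NeZero.ne n)
    have partialSum_last : Fin.partialSum w (Fin.last _) = 0 := by
      rw [Fin.partialSum, Fin.val_last, List.take_of_length_le (by simp), List.sum_ofFn, h]
    refine ⟨fun k ↦ Fin.partialSum w k.castSucc, fun k ↦ ?_⟩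
    rw [sub_eq_iff_eq_add', ← Fin.partialSum_succ]
    cases k using Fin.lastCases with
    | last => simp [partialSum_last]
    | cast k => simp

theorem exists_forall_add_eq_and_add_one_add_eq_iff {t u : Fin n → G} :
    (∃ a b : Fin n → G, ∀ k, a k + b k = t k ∧ a (k + 1) + b k = u k) ↔
      ∑ k, t k = ∑ k, u k := by
  rw [eq_comm, ← sub_eq_zero, ← Finset.sum_sub_distrib,
    ← exists_forall_add_one_sub_eq_iff_sum_eq_zero]
  constructor
  · rintro ⟨a, b, h⟩
    exact ⟨a, fun k ↦ by rw [← (h k).1, ← (h k).2, add_sub_add_right_eq_sub]⟩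
  · rintro ⟨a, ha⟩
    exact ⟨a, fun k ↦ t k - a k, fun k ↦
      ⟨add_sub_cancel _ _, by rw [add_sub_left_comm, ha, add_sub_cancel]⟩⟩

end CyclicSystem

theorem injective_fin_three_iff {α : Type*} {f : Fin 3 → α} :
    Function.Injective f ↔ ∀ k, f k ≠ f (k + 1) := by
  refine ⟨fun hf k ↦ hf.ne (by decide +revert), fun hf k l hkl ↦ ?_⟩
  by_contra hne
  have : l = k + 1 ∨ k = l + 1 := by grind
  rcases this with rfl | rfl
  exacts [hf _ hkl, hf _ hkl.symm]

section DPMArray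

variable {I J G : Type*} [DecidableEq G]

/-- The block matrix of dyadic permutation matrices over the index group `G`: the block at `(i, j)`
is zero if `B i j = none`, and has its ones at the `(a, b)` with `a + b = s` if `B i j = some s`. -/
def dpmArray [Add G] (B : Matrix I J (Option G)) : Matrix (I × G) (J × G) (ZMod 2) :=
  .of fun x y ↦ if B x.1 y.1 = some (x.2 + y.2) then 1 else 0

variable {B : Matrix I J (Option G)}

theorem dpmArray_apply_eq_one_iff [Add G] {x : I × G} {y : J × G} :
    dpmArray B x y = 1 ↔ B x.1 y.1 = some (x.2 + y.2) := by
  simp [dpmArray]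

theorem row_eq_of_dpmArray_apply_eq_one [Add G] [IsRightCancelAdd G] {x x' : I × G} {y : J × G}
    (h : dpmArray B x y = 1) (h' : dpmArray B x' y = 1) (h_fst : x.1 = x'.1) : x = x' := by
  rw [dpmArray_apply_eq_one_iff] at h h'
  rw [h_fst, h', Option.some_inj, add_left_inj] at h
  exact Prod.ext h_fst h.symm

theorem col_eq_of_dpmArray_apply_eq_one [Add G] [IsLeftCancelAdd G] {x : I × G} {y y' : J × G}
    (h : dpmArray B x y = 1) (h' : dpmArray B x y' = 1) (h_fst : y.1 = y'.1) : y = y' := by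
  rw [dpmArray_apply_eq_one_iff] at h h'
  rw [h_fst, h', Option.some_inj, add_right_inj] at h
  exact Prod.ext h_fst h.symm

theorem IsHexagon.injective_blockRow [Add G] [IsRightCancelAdd G]
    {r : Fin 3 → I × G} {c : Fin 3 → J × G}
    (h : IsHexagon (dpmArray B) r c) : Function.Injective fun k ↦ (r k).1 :=
  injective_fin_three_iff.mpr fun k hk ↦ injective_fin_three_iff.mp h.row_injective k <|
    row_eq_of_dpmArray_apply_eq_one (h.apply_self k) (h.apply_add_one k) hk

theorem IsHexagon.injective_blockCol [Add G] [IsLeftCancelAdd G]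
    {r : Fin 3 → I × G} {c : Fin 3 → J × G}
    (h : IsHexagon (dpmArray B) r c) : Function.Injective fun k ↦ (c k).1 :=
  injective_fin_three_iff.mpr fun k hk ↦ injective_fin_three_iff.mp h.col_injective k <|
    col_eq_of_dpmArray_apply_eq_one (h.apply_add_one k) (h.apply_self (k + 1)) hk

theorem exists_isHexagon_dpmArray_iff [AddCommGroup G] :
    (∃ r c, IsHexagon (dpmArray B) r c) ↔
      ∃ (i : Fin 3 → I) (j : Fin 3 → J) (t u : Fin 3 → G),
        Function.Injective i ∧ Function.Injective j ∧
        (∀ k, B (i k) (j k) = some (t k)) ∧ (∀ k, B (i (k + 1)) (j k) = some (u k)) ∧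
        ∑ k, t k = ∑ k, u k := by
  constructor
  · rintro ⟨r, c, h⟩
    exact ⟨_, _, _, _, h.injective_blockRow, h.injective_blockCol,
      fun k ↦ dpmArray_apply_eq_one_iff.mp (h.apply_self k),
      fun k ↦ dpmArray_apply_eq_one_iff.mp (h.apply_add_one k),
      exists_forall_add_eq_and_add_one_add_eq_iff.mp
        ⟨fun k ↦ (r k).2, fun k ↦ (c k).2, fun _ ↦ ⟨rfl, rfl⟩⟩⟩
  · rintro ⟨i, j, t, u, hi, hj, ht, hu, hsum⟩
    obtain ⟨a, b, hab⟩ := exists_forall_add_eq_and_add_one_add_eq_iff.mpr hsum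
    refine ⟨fun k ↦ (i k, a k), fun k ↦ (j k, b k), fun k l h ↦ hi (congrArg Prod.fst h),
      fun k l h ↦ hj (congrArg Prod.fst h), fun k ↦ ?_, fun k ↦ ?_⟩
    · rw [dpmArray_apply_eq_one_iff, ht, (hab k).1]
    · rw [dpmArray_apply_eq_one_iff, hu, (hab k).2]

end DPMArray

theorem apply_add_one_of_injective_fin_three {i : Fin 3 → Fin 3} (hi : Function.Injective i) :
    (∀ k, i (k + 1) = i k + 1) ∨ (∀ k, i (k + 1) = i k + 2) := by
  decide +revert

theorem exists_isHexagon_dpmArray_fin_three_iff {G : Type*} [AddCommGroup G] [DecidableEq G]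
    {B : Matrix (Fin 3) (Fin 3) (Option G)} {d e : Fin 3 → G} (hd : ∀ m, B m m = some (d m))
    (he : ∀ m, B (m + 1) m = some (e m)) (hnone : ∀ m, B (m + 2) m = none) :
    (∃ r c, IsHexagon (dpmArray B) r c) ↔ ∑ m, d m = ∑ m, e m := by
  rw [exists_isHexagon_dpmArray_iff]
  constructor
  · rintro ⟨i, j, t, u, hi, hj, ht, hu, hsum⟩
    have sum_comp (f : Fin 3 → G) : ∑ k, f (j k) = ∑ m, f m :=
      (Finite.injective_iff_bijective.mp hj).sum_comp f
    have hi_ne (k) : i k ≠ j k + 2 := fun hk ↦ by simpa [hk, hnone] using ht k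
    have hi_succ_ne (k) : i (k + 1) ≠ j k + 2 := fun hk ↦ by simpa [hk, hnone] using hu k
    -- The hexagon traverses the array either forwards, where `t` and `u` list `d` and `e`, or
    -- backwards, where they list `e` and `d`.
    rcases apply_add_one_of_injective_fin_three hi with hdir | hdir
    · have hij (k) : i k = j k := by grind
      have ht' (k) : t k = d (j k) := by simpa [hij, hd] using (ht k).symm
      have hu' (k) : u k = e (j k) := by simpa [hdir, hij, he] using (hu k).symm
      simpa only [ht', hu', sum_comp] using hsum
    · have hij (k) : i k = j k + 1 := by grind
      have ht' (k) : t k = e (j k) := by simpa [hij, he] using (ht k).symm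
      have hu' (k) : u k = d (j k) := by simpa [hdir, hij, hd, add_assoc] using (hu k).symm
      simpa only [ht', hu', sum_comp] using hsum.symm
  · exact fun hsum ↦ ⟨id, id, d, e, Function.injective_id, Function.injective_id, hd, he, hsum⟩

theorem dpmArray3x3_six_cycle_iff_general {G : Type*} [AddCommGroup G] [DecidableEq G]
    (s00 s02 s10 s11 s21 s22 : G)
    (M : Matrix (Fin 3 × G) (Fin 3 × G) (ZMod 2))
    (hM00 : ∀ a b : G, M (0, a) (0, b) = if a + b = s00 then 1 else 0)
    (hM01 : ∀ a b : G, M (0, a) (1, b) = 0)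
    (hM02 : ∀ a b : G, M (0, a) (2, b) = if a + b = s02 then 1 else 0)
    (hM10 : ∀ a b : G, M (1, a) (0, b) = if a + b = s10 then 1 else 0)
    (hM11 : ∀ a b : G, M (1, a) (1, b) = if a + b = s11 then 1 else 0)
    (hM12 : ∀ a b : G, M (1, a) (2, b) = 0)
    (hM20 : ∀ a b : G, M (2, a) (0, b) = 0)
    (hM21 : ∀ a b : G, M (2, a) (1, b) = if a + b = s21 then 1 else 0)
    (hM22 : ∀ a b : G, M (2, a) (2, b) = if a + b = s22 then 1 else 0) :
    (∃ (v : (Fin 3 × G) ⊕ (Fin 3 × G)) (c : (tanner M).Walk v v), c.IsCycle ∧ c.length = 6) ↔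
      s00 - s02 - s10 + s11 - s21 + s22 = 0 := by
  have M_eq : M = dpmArray
      !![some s00, none, some s02; some s10, some s11, none; none, some s21, some s22] := by
    ext ⟨i, a⟩ ⟨j, b⟩
    fin_cases i <;> fin_cases j <;> simp [dpmArray, eq_comm, *]
  rw [M_eq, exists_isCycle_length_six_tanner_iff,
    exists_isHexagon_dpmArray_fin_three_iff (d := ![s00, s11, s22]) (e := ![s10, s21, s02])
      (by simp [Fin.forall_fin_succ]) (by simp [Fin.forall_fin_succ])
      (by simp [Fin.forall_fin_succ]), ← sub_eq_zero]
  have alternating_sum : ∑ m, ![s00, s11, s22] m - ∑ m, ![s10, s21, s02] m =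
      s00 - s02 - s10 + s11 - s21 + s22 := by
    simp only [Fin.sum_univ_three, Matrix.cons_val]
    abel
  rw [alternating_sum]

/-- For the `3 × 3` block matrix with DPM blocks in positions
`(0,0), (0,2), (1,0), (1,1), (2,1), (2,2)` and zero blocks elsewhere, the Tanner graph
contains a length-6 cycle iff the sum of the six positions vanishes. -/
theorem dpmArray3x3_six_cycle_iff (ℓ : ℕ)
    (s00 s02 s10 s11 s21 s22 : V ℓ)
    (M : Matrix (Fin 3 × V ℓ) (Fin 3 × V ℓ) (ZMod 2))
    (hM00 : ∀ a b : V ℓ, M (0, a) (0, b) = if a + b = s00 then 1 else 0)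
    (hM01 : ∀ a b : V ℓ, M (0, a) (1, b) = 0)
    (hM02 : ∀ a b : V ℓ, M (0, a) (2, b) = if a + b = s02 then 1 else 0)
    (hM10 : ∀ a b : V ℓ, M (1, a) (0, b) = if a + b = s10 then 1 else 0)
    (hM11 : ∀ a b : V ℓ, M (1, a) (1, b) = if a + b = s11 then 1 else 0)
    (hM12 : ∀ a b : V ℓ, M (1, a) (2, b) = 0)
    (hM20 : ∀ a b : V ℓ, M (2, a) (0, b) = 0)
    (hM21 : ∀ a b : V ℓ, M (2, a) (1, b) = if a + b = s21 then 1 else 0)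
    (hM22 : ∀ a b : V ℓ, M (2, a) (2, b) = if a + b = s22 then 1 else 0) :
    (∃ (v : (Fin 3 × V ℓ) ⊕ (Fin 3 × V ℓ)) (c : (tanner M).Walk v v),
      c.IsCycle ∧ c.length = 6) ↔
    s00 + s02 + s10 + s11 + s21 + s22 = 0 := by
  simpa only [ZModModule.sub_eq_add] using dpmArray3x3_six_cycle_iff_general s00 s02 s10 s11 s21 s22
    M hM00 hM01 hM02 hM10 hM11 hM12 hM20 hM21 hM22
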